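/- Let a, b be real numbers and let u, v : ℝ × ℝ → ℝ be smooth (C^∞) on [0,∞) × [0,1], satisfying the coupled Burgers' equations ∂_t u = ∂_{xx} u − u ∂_x u − a ∂_x(uv) and ∂_t v = ∂_{xx} v − v ∂_x v − b ∂_x(uv) for all t ≥ 0 and x ∈ [0,1], with Dirichlet boundary conditions u(t,0) = u(t,1) = v(t,0) = v(t,1) = 0 for all t ≥ 0. Define J(t) := ½(∫₀¹ (∂_x u(t,x))² dx + ∫₀¹ (∂_x v(t,x))² dx) and K(t) := ½(∫₀¹ (∂_{xx} u(t,x))² dx + ∫₀¹ (∂_{xx} v(t,x))² dx). Then for every t ≥ 0, J'(t) ≤ -2 K(t) + 8 J(t) K(t)^{1/2} + 8√3 · 2^{1/4} (|a|+|b|) J(t)^{3/4} K(t)^{3/4}. -/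

import Mathlib

open Set MeasureTheory

abbrev BS : Set (ℝ × ℝ) := Set.Ici (0:ℝ) ×ˢ Set.Icc (0:ℝ) 1

noncomputable def BDx (f : ℝ × ℝ → ℝ) (p : ℝ × ℝ) : ℝ := fderivWithin ℝ f BS p (0, 1)
noncomputable def BDt (f : ℝ × ℝ → ℝ) (p : ℝ × ℝ) : ℝ := fderivWithin ℝ f BS p (1, 0)

lemma BS_unique : UniqueDiffOn ℝ BS :=
  (uniqueDiffOn_Ici 0).prod (uniqueDiffOn_Icc zero_lt_one)

lemma BS_int : interior BS = Ioi (0:ℝ) ×ˢ Ioo (0:ℝ) 1 := by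
  rw [interior_prod_eq, interior_Ici, interior_Icc]

lemma BS_clos : closure (Ioi (0:ℝ) ×ˢ Ioo (0:ℝ) 1) = BS := by
  rw [closure_prod_eq, closure_Ioi, closure_Ioo (by norm_num)]

lemma BDx_smooth {f : ℝ × ℝ → ℝ} (hf : ContDiffOn ℝ (⊤ : ℕ∞) f BS) :
    ContDiffOn ℝ (⊤ : ℕ∞) (BDx f) BS :=
  (hf.fderivWithin BS_unique (by simp)).clm_apply contDiffOn_const

lemma BDt_smooth {f : ℝ × ℝ → ℝ} (hf : ContDiffOn ℝ (⊤ : ℕ∞) f BS) :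
    ContDiffOn ℝ (⊤ : ℕ∞) (BDt f) BS :=
  (hf.fderivWithin BS_unique (by simp)).clm_apply contDiffOn_const

lemma BDx_hasDeriv {f : ℝ × ℝ → ℝ} (hf : ContDiffOn ℝ (⊤ : ℕ∞) f BS) {t x : ℝ}
    (ht : 0 ≤ t) (hx : x ∈ Icc (0:ℝ) 1) :
    HasDerivWithinAt (fun y => f (t, y)) (BDx f (t, x)) (Icc 0 1) x := by
  have h := ((hf.differentiableOn (by simp)) (t, x) ⟨ht, hx⟩).hasFDerivWithinAt
  have h2 : HasDerivWithinAt (fun y : ℝ => ((t, y) : ℝ × ℝ)) (0, 1) (Icc 0 1) x :=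
    (hasDerivWithinAt_const x _ t).prodMk (hasDerivWithinAt_id x _)
  exact h.comp_hasDerivWithinAt x h2 (fun y hy => ⟨ht, hy⟩)

lemma BDt_hasDeriv {f : ℝ × ℝ → ℝ} (hf : ContDiffOn ℝ (⊤ : ℕ∞) f BS) {t x : ℝ}
    (ht : 0 ≤ t) (hx : x ∈ Icc (0:ℝ) 1) :
    HasDerivWithinAt (fun s => f (s, x)) (BDt f (t, x)) (Ici 0) t := by
  have h := ((hf.differentiableOn (by simp)) (t, x) ⟨ht, hx⟩).hasFDerivWithinAt
  have h2 : HasDerivWithinAt (fun y : ℝ => ((y, x) : ℝ × ℝ)) (1, 0) (Ici 0) t :=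
    (hasDerivWithinAt_id t _).prodMk (hasDerivWithinAt_const t _ x)
  exact h.comp_hasDerivWithinAt t h2 (fun y (hy : 0 ≤ y) => (⟨hy, hx⟩ : (y, x) ∈ BS))

lemma BDxt_symm {f : ℝ × ℝ → ℝ} (hf : ContDiffOn ℝ (⊤ : ℕ∞) f BS) {p : ℝ × ℝ} (hp : p ∈ BS) :
    BDt (BDx f) p = BDx (BDt f) p := by
  have hs : IsSymmSndFDerivWithinAt ℝ f BS p := by
    refine (hf p hp).isSymmSndFDerivWithinAt ?_ BS_unique ?_ hp
    · simp
      exact WithTop.coe_le_coe.2 le_top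
    · rw [BS_int, BS_clos]; exact hp
  have hd : DifferentiableWithinAt ℝ (fderivWithin ℝ f BS) BS p :=
    ((hf.fderivWithin (m := (⊤ : ℕ∞)) BS_unique (by simp)).differentiableOn (by simp)) p hp
  have key : ∀ c d : ℝ × ℝ, fderivWithin ℝ (fun q => fderivWithin ℝ f BS q c) BS p d
      = fderivWithin ℝ (fderivWithin ℝ f BS) BS p d c := by
    intro c d
    rw [fderivWithin_clm_apply (BS_unique p hp) hd (differentiableWithinAt_const c)]
    simp
  unfold BDt BDx
  rw [key, key]
  exact hs _ _

lemma BDx_deriv {f : ℝ × ℝ → ℝ} (hf : ContDiffOn ℝ (⊤ : ℕ∞) f BS) {t x : ℝ}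
    (ht : 0 ≤ t) (hx : x ∈ Ioo (0:ℝ) 1) :
    deriv (fun y => f (t, y)) x = BDx f (t, x) :=
  ((BDx_hasDeriv hf ht (Ioo_subset_Icc_self hx)).hasDerivAt (Icc_mem_nhds hx.1 hx.2)).deriv

lemma BDxx_deriv {f : ℝ × ℝ → ℝ} (hf : ContDiffOn ℝ (⊤ : ℕ∞) f BS) {t x : ℝ}
    (ht : 0 ≤ t) (hx : x ∈ Ioo (0:ℝ) 1) :
    deriv (deriv (fun y => f (t, y))) x = BDx (BDx f) (t, x) := by
  rw [← BDx_deriv (BDx_smooth hf) ht hx]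
  apply Filter.EventuallyEq.deriv_eq
  filter_upwards [Ioo_mem_nhds hx.1 hx.2] with y hy
  exact BDx_deriv hf ht hy

lemma BDt_deriv {f : ℝ × ℝ → ℝ} (hf : ContDiffOn ℝ (⊤ : ℕ∞) f BS) {t x : ℝ}
    (ht : 0 < t) (hx : x ∈ Icc (0:ℝ) 1) :
    deriv (fun s => f (s, x)) t = BDt f (t, x) :=
  ((BDt_hasDeriv hf ht.le hx).hasDerivAt (Ici_mem_nhds ht)).deriv

lemma BDt_bdry {f : ℝ × ℝ → ℝ} (hf : ContDiffOn ℝ (⊤ : ℕ∞) f BS) {t x : ℝ}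
    (ht : 0 ≤ t) (hx : x ∈ Icc (0:ℝ) 1) (h0 : ∀ s ≥ 0, f (s, x) = 0) : BDt f (t, x) = 0 := by
  have h := BDt_hasDeriv hf ht hx
  have h2 : HasDerivWithinAt (fun s => f (s, x)) 0 (Ici 0) t :=
    (hasDerivWithinAt_const t _ (0:ℝ)).congr (fun s hs => h0 s hs) (h0 t ht)
  exact (uniqueDiffOn_Ici (0:ℝ) t ht).eq_deriv _ h h2

lemma B_slice {f : ℝ × ℝ → ℝ} (hf : ContinuousOn f BS) {t : ℝ} (ht : 0 ≤ t) :
    ContinuousOn (fun y => f (t, y)) (Icc 0 1) :=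
  hf.comp (by fun_prop) (fun y hy => ⟨ht, hy⟩)

/-- differentiation under the integral sign -/
lemma B_leibniz {F g : ℝ × ℝ → ℝ} (hFc : ContinuousOn F BS) (hg : ContinuousOn g BS)
    (hF : ∀ t ≥ 0, ∀ x ∈ Icc (0:ℝ) 1, HasDerivWithinAt (fun s => F (s, x)) (g (t, x)) (Ici 0) t)
    {t : ℝ} (ht : 0 ≤ t) :
    HasDerivWithinAt (fun t => ∫ x in (0:ℝ)..1, F (t, x)) (∫ x in (0:ℝ)..1, g (t, x)) (Ici 0) t := by
  set P : ℝ × ℝ → ℝ × ℝ := fun p => (max 0 p.1, max 0 (min 1 p.2)) with hP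
  have hPS : ∀ p, P p ∈ BS := by
    intro p
    refine ⟨?_, ?_, ?_⟩ <;> simp [hP]
  have hPid : ∀ s x, 0 ≤ s → x ∈ Icc (0:ℝ) 1 → P (s, x) = (s, x) := by
    intro s x hs hx
    simp [hP, hs, hx.1, hx.2]
  have hPc : Continuous P := by fun_prop
  have hgc : Continuous (fun p => g (P p)) := hg.comp_continuous hPc hPS
  set G : ℝ → ℝ := fun s => ∫ x in (0:ℝ)..1, g (P (s, x)) with hG
  have hGc : Continuous G := by
    apply intervalIntegral.continuous_parametric_intervalIntegral_of_continuous'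
    exact hgc
  have hkey : ∀ s ≥ 0, ∫ x in (0:ℝ)..1, F (s, x) = (∫ x in (0:ℝ)..1, F (0, x)) + ∫ r in (0:ℝ)..s, G r := by
    intro s hs
    have hsw : ∫ r in (0:ℝ)..s, G r = ∫ x in (0:ℝ)..1, ∫ r in (0:ℝ)..s, g (P (r, x)) := by
      apply intervalIntegral_intervalIntegral_swap
      exact (hgc.continuousOn.integrableOn_compact (isCompact_uIcc.prod isCompact_uIcc)).mono_set
        (prod_mono uIoc_subset_uIcc uIoc_subset_uIcc)
    rw [hsw, ← intervalIntegral.integral_add]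
    · apply intervalIntegral.integral_congr
      intro x hx
      rw [uIcc_of_le zero_le_one] at hx
      have : ∫ r in (0:ℝ)..s, g (P (r, x)) = F (s, x) - F (0, x) := by
        apply intervalIntegral.integral_eq_sub_of_hasDerivAt_of_le (f := fun s => F (s, x)) hs
        · exact hFc.comp (by fun_prop) (fun y hy => ⟨hy.1, hx⟩)
        · intro r hr
          rw [hPid r x hr.1.le hx]
          exact (hF r hr.1.le x hx).hasDerivAt (Ici_mem_nhds hr.1)
        · exact (hgc.comp (by fun_prop : Continuous fun r : ℝ => (r, x))).intervalIntegrable _ _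
      simp only [this]; ring
    · apply ContinuousOn.intervalIntegrable
      rw [uIcc_of_le zero_le_one]
      exact B_slice hFc le_rfl
    · apply Continuous.intervalIntegrable
      apply intervalIntegral.continuous_parametric_intervalIntegral_of_continuous'
      exact hgc.comp (by fun_prop : Continuous fun p : ℝ × ℝ => (p.2, p.1))
  have hGt : G t = ∫ x in (0:ℝ)..1, g (t, x) := by
    apply intervalIntegral.integral_congr
    intro x hx
    rw [uIcc_of_le zero_le_one] at hx
    simp only [hPid t x ht hx]
  have hd : HasDerivAt (fun s => (∫ x in (0:ℝ)..1, F (0, x)) + ∫ r in (0:ℝ)..s, G r) (G t) t :=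
    (hGc.integral_hasStrictDerivAt 0 t).hasDerivAt.const_add _
  rw [← hGt]
  exact hd.hasDerivWithinAt.congr (fun s hs => hkey s hs) (hkey t ht)

lemma B_int {f : ℝ → ℝ} (hf : ContinuousOn f (Icc 0 1)) {c d : ℝ} (hc : 0 ≤ c) (hcd : c ≤ d)
    (hd : d ≤ 1) : IntervalIntegrable f volume c d := by
  apply ContinuousOn.intervalIntegrable
  rw [uIcc_of_le hcd]
  exact hf.mono (Icc_subset_Icc hc hd)

lemma B_cs {f g : ℝ → ℝ} (hf : ContinuousOn f (Icc 0 1)) (hg : ContinuousOn g (Icc 0 1))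
    {d : ℝ} (h0 : 0 ≤ d) (hd : d ≤ 1) :
    (∫ x in (0:ℝ)..d, f x * g x) ^ 2 ≤ (∫ x in (0:ℝ)..d, f x ^ 2) * ∫ x in (0:ℝ)..d, g x ^ 2 := by
  have key : ∀ c : ℝ, 0 ≤ (∫ x in (0:ℝ)..d, g x ^ 2) * (c * c)
      + (2 * ∫ x in (0:ℝ)..d, f x * g x) * c + ∫ x in (0:ℝ)..d, f x ^ 2 := by
    intro c
    have h : 0 ≤ ∫ x in (0:ℝ)..d, (f x + c * g x) ^ 2 :=
      intervalIntegral.integral_nonneg h0 (fun x _ => sq_nonneg _)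
    have e : ∫ x in (0:ℝ)..d, (f x + c * g x) ^ 2 = ∫ x in (0:ℝ)..d,
        ((c * c) * g x ^ 2 + (2 * c) * (f x * g x) + f x ^ 2) := by
      congr 1; ext x; ring
    rw [e, intervalIntegral.integral_add, intervalIntegral.integral_add,
      intervalIntegral.integral_const_mul, intervalIntegral.integral_const_mul] at h
    · linarith
    all_goals
      refine B_int ?_ le_rfl h0 hd
      fun_prop
  have := discrim_le_zero key
  unfold discrim at this
  nlinarith

lemma B_sup {f f' : ℝ → ℝ} (hf : ∀ x ∈ Icc (0:ℝ) 1, HasDerivWithinAt f (f' x) (Icc 0 1) x)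
    (hf' : ContinuousOn f' (Icc 0 1)) (h0 : f 0 = 0) {x : ℝ} (hx : x ∈ Icc (0:ℝ) 1) :
    f x ^ 2 ≤ ∫ y in (0:ℝ)..1, f' y ^ 2 := by
  have e : ∫ y in (0:ℝ)..x, f' y * 1 = f x := by
    simp only [mul_one]
    rw [intervalIntegral.integral_eq_sub_of_hasDerivAt_of_le hx.1 (f := f), h0, sub_zero]
    · intro y hy
      exact (hf y ⟨hy.1, hy.2.trans hx.2⟩).continuousWithinAt.mono (Icc_subset_Icc le_rfl hx.2)
    · intro y hy
      exact (hf y ⟨hy.1.le, (hy.2.trans_le hx.2).le⟩).hasDerivAt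
        (Icc_mem_nhds hy.1 (hy.2.trans_le hx.2))
    · exact B_int hf' le_rfl hx.1 hx.2
  have h := B_cs hf' (continuousOn_const (c := (1:ℝ))) hx.1 hx.2
  rw [e] at h
  simp only [one_pow, intervalIntegral.integral_const, sub_zero, smul_eq_mul, mul_one] at h
  have hsq : ContinuousOn (fun y => f' y ^ 2) (Icc 0 1) := by fun_prop
  have h2 : ∫ y in (0:ℝ)..x, f' y ^ 2 ≤ ∫ y in (0:ℝ)..1, f' y ^ 2 := by
    rw [← intervalIntegral.integral_add_adjacent_intervals (B_int hsq le_rfl hx.1 hx.2)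
      (B_int hsq hx.1 hx.2 le_rfl)]
    have := intervalIntegral.integral_nonneg (μ := volume) hx.2 (fun y _ => sq_nonneg (f' y))
    linarith
  have h3 : 0 ≤ ∫ y in (0:ℝ)..x, f' y ^ 2 :=
    intervalIntegral.integral_nonneg hx.1 (fun y _ => sq_nonneg _)
  nlinarith [hx.2]

/-- triple product bound -/
lemma B_triple {f f' g h : ℝ → ℝ} (hf : ∀ x ∈ Icc (0:ℝ) 1, HasDerivWithinAt f (f' x) (Icc 0 1) x)
    (hf' : ContinuousOn f' (Icc 0 1)) (h0 : f 0 = 0) (hg : ContinuousOn g (Icc 0 1))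
    (hh : ContinuousOn h (Icc 0 1)) :
    |∫ x in (0:ℝ)..1, f x * g x * h x| ≤ √(∫ x in (0:ℝ)..1, f' x ^ 2) *
      √(∫ x in (0:ℝ)..1, g x ^ 2) * √(∫ x in (0:ℝ)..1, h x ^ 2) := by
  have hfc : ContinuousOn f (Icc 0 1) := fun x hx => (hf x hx).continuousWithinAt
  have hA : 0 ≤ ∫ x in (0:ℝ)..1, f' x ^ 2 :=
    intervalIntegral.integral_nonneg zero_le_one (fun y _ => sq_nonneg _)
  have hH : 0 ≤ ∫ x in (0:ℝ)..1, h x ^ 2 :=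
    intervalIntegral.integral_nonneg zero_le_one (fun y _ => sq_nonneg _)
  have hGn : 0 ≤ ∫ x in (0:ℝ)..1, g x ^ 2 :=
    intervalIntegral.integral_nonneg zero_le_one (fun y _ => sq_nonneg _)
  have c := B_cs (f := fun x => f x * g x) (hfc.mul hg) hh zero_le_one le_rfl
  have m : ∫ x in (0:ℝ)..1, (f x * g x) ^ 2 ≤
      (∫ x in (0:ℝ)..1, f' x ^ 2) * ∫ x in (0:ℝ)..1, g x ^ 2 := by
    rw [← intervalIntegral.integral_const_mul]
    apply intervalIntegral.integral_mono_on zero_le_one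
    · exact B_int (by fun_prop) le_rfl zero_le_one le_rfl
    · exact B_int (by fun_prop) le_rfl zero_le_one le_rfl
    · intro x hx
      rw [mul_pow]
      exact mul_le_mul_of_nonneg_right (B_sup hf hf' h0 hx) (sq_nonneg _)
  rw [← Real.sqrt_mul hA, ← Real.sqrt_mul (mul_nonneg hA hGn)]
  apply Real.abs_le_sqrt
  exact c.trans (mul_le_mul_of_nonneg_right m hH)

lemma B_poincare {f f' f'' : ℝ → ℝ}
    (hf : ∀ x ∈ Icc (0:ℝ) 1, HasDerivWithinAt f (f' x) (Icc 0 1) x)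
    (hf' : ∀ x ∈ Icc (0:ℝ) 1, HasDerivWithinAt f' (f'' x) (Icc 0 1) x)
    (hf'' : ContinuousOn f'' (Icc 0 1)) (h0 : f 0 = 0) (h1 : f 1 = 0) :
    ∫ x in (0:ℝ)..1, f' x ^ 2 ≤ ∫ x in (0:ℝ)..1, f'' x ^ 2 := by
  have hfc : ContinuousOn f (Icc 0 1) := fun x hx => (hf x hx).continuousWithinAt
  have hfc' : ContinuousOn f' (Icc 0 1) := fun x hx => (hf' x hx).continuousWithinAt
  have e : ∫ x in (0:ℝ)..1, f' x * f' x = - ∫ x in (0:ℝ)..1, f'' x * f x := by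
    rw [intervalIntegral.integral_mul_deriv_eq_deriv_mul_of_hasDerivWithinAt (u := f') (v := f)
      (u' := f'') (v' := f')]
    · simp [h0, h1]
    · rwa [uIcc_of_le zero_le_one]
    · rwa [uIcc_of_le zero_le_one]
    · exact B_int hf'' le_rfl zero_le_one le_rfl
    · exact B_int hfc' le_rfl zero_le_one le_rfl
  have t := B_cs hf'' hfc zero_le_one le_rfl
  have m : ∫ x in (0:ℝ)..1, f x ^ 2 ≤ ∫ x in (0:ℝ)..1, f' x ^ 2 := by
    have : ∫ x in (0:ℝ)..1, f x ^ 2 ≤ ∫ _ in (0:ℝ)..1, ∫ x in (0:ℝ)..1, f' x ^ 2 := by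
      apply intervalIntegral.integral_mono_on zero_le_one
      · exact B_int (by fun_prop) le_rfl zero_le_one le_rfl
      · exact B_int (by fun_prop) le_rfl zero_le_one le_rfl
      · intro x hx
        exact B_sup hf hfc' h0 hx
    simpa using this
  have e2 : ∫ x in (0:ℝ)..1, f' x ^ 2 = - ∫ x in (0:ℝ)..1, f'' x * f x := by
    rw [← e]; congr 1; ext x; ring
  have hA : 0 ≤ ∫ x in (0:ℝ)..1, f' x ^ 2 :=
    intervalIntegral.integral_nonneg zero_le_one (fun y _ => sq_nonneg _)
  have hH : 0 ≤ ∫ x in (0:ℝ)..1, f'' x ^ 2 :=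
    intervalIntegral.integral_nonneg zero_le_one (fun y _ => sq_nonneg _)
  have t2 : (∫ x in (0:ℝ)..1, f' x ^ 2) ^ 2 ≤
      (∫ x in (0:ℝ)..1, f'' x ^ 2) * ∫ x in (0:ℝ)..1, f' x ^ 2 := by
    have : (∫ x in (0:ℝ)..1, f' x ^ 2) ^ 2 = (∫ x in (0:ℝ)..1, f'' x * f x) ^ 2 := by
      rw [e2]; ring
    rw [this]
    exact t.trans (mul_le_mul_of_nonneg_left m hH)
  by_contra hlt
  push Not at hlt
  nlinarith

lemma B_final {a b p q r s T1 T2 T3 T4 T5 T6 J K : ℝ} (hp : 0 ≤ p) (hq : 0 ≤ q) (hr : 0 ≤ r)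
    (hs : 0 ≤ s) (hJ : J = (1/2) * (p ^ 2 + q ^ 2)) (hK : K = (1/2) * (r ^ 2 + s ^ 2))
    (hpr : p ^ 2 ≤ r ^ 2) (hqs : q ^ 2 ≤ s ^ 2)
    (h1 : |T1| ≤ p * p * r) (h2 : |T2| ≤ q * q * s)
    (h3 : |T3| ≤ q * p * r) (h4 : |T4| ≤ p * q * r)
    (h5 : |T5| ≤ q * p * s) (h6 : |T6| ≤ p * q * s) :
    -2 * K + T1 + T2 + a * (T3 + T4) + b * (T5 + T6) ≤ -2 * K + 8 * J * √K
        + 8 * √3 * (2:ℝ) ^ ((1:ℝ)/4) * (|a| + |b|)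
          * J ^ ((3:ℝ)/4) * K ^ ((3:ℝ)/4) := by
  have hJ0 : 0 ≤ J := by rw [hJ]; positivity
  have hK0 : 0 ≤ K := by rw [hK]; positivity
  have hJK : J ≤ K := by rw [hJ, hK]; linarith
  have hk := Real.sqrt_nonneg K
  have hkk := Real.sq_sqrt hK0
  have hrk : r ≤ 2 * √K := by
    refine (pow_le_pow_iff_left₀ (by assumption) (by positivity) two_ne_zero).1 ?_
    nlinarith [sq_nonneg s]
  have hsk : s ≤ 2 * √K := by
    refine (pow_le_pow_iff_left₀ (by assumption) (by positivity) two_ne_zero).1 ?_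
    nlinarith [sq_nonneg r]
  have hpq : p * q ≤ J := by rw [hJ]; nlinarith [sq_nonneg (p - q)]
  have hR : J * √K ≤ J ^ ((3:ℝ)/4) * K ^ ((3:ℝ)/4) := by
    have e1 : J = J ^ ((3:ℝ)/4) * J ^ ((1:ℝ)/4) := by
      rw [← Real.rpow_add' hJ0 (by norm_num)]; norm_num
    have e2 : K ^ ((3:ℝ)/4) = K ^ ((1:ℝ)/4) * √K := by
      rw [Real.sqrt_eq_rpow, ← Real.rpow_add' hK0 (by norm_num)]; norm_num
    have e3 : J ^ ((1:ℝ)/4) ≤ K ^ ((1:ℝ)/4) := Real.rpow_le_rpow hJ0 hJK (by norm_num)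
    calc J * √K = J ^ ((3:ℝ)/4) * (J ^ ((1:ℝ)/4) * √K) := by rw [← mul_assoc, ← e1]
      _ ≤ J ^ ((3:ℝ)/4) * (K ^ ((1:ℝ)/4) * √K) := by gcongr
      _ = _ := by rw [e2]
  have hC : 4 ≤ 8 * √3 * (2:ℝ) ^ ((1:ℝ)/4) := by
    have c1 : 1 ≤ √3 := Real.one_le_sqrt.2 (by norm_num)
    have c2 : 1 ≤ (2:ℝ) ^ ((1:ℝ)/4) := Real.one_le_rpow (by norm_num) (by norm_num)
    nlinarith
  have b1 : T1 + T2 ≤ 4 * (J * √K) := by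
    have i1 : p * p * r ≤ p * p * (2 * √K) := by gcongr
    have i2 : q * q * s ≤ q * q * (2 * √K) := by gcongr
    have i3 : 4 * (J * √K) = p * p * (2 * √K) + q * q * (2 * √K) := by rw [hJ]; ring
    linarith [le_abs_self T1, le_abs_self T2]
  have g1 : p * q * r ≤ J * (2 * √K) := by gcongr
  have g2 : p * q * s ≤ J * (2 * √K) := by gcongr
  have b2 : |T3 + T4| ≤ 4 * (J * √K) := by
    have := abs_add_le T3 T4
    linarith
  have b3 : |T5 + T6| ≤ 4 * (J * √K) := by
    have := abs_add_le T5 T6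
    linarith
  have b4 : a * (T3 + T4) ≤ |a| * (4 * (J * √K)) := by
    calc _ ≤ |a * (T3 + T4)| := le_abs_self _
      _ = |a| * |T3 + T4| := abs_mul _ _
      _ ≤ _ := by gcongr
  have b5 : b * (T5 + T6) ≤ |b| * (4 * (J * √K)) := by
    calc _ ≤ |b * (T5 + T6)| := le_abs_self _
      _ = |b| * |T5 + T6| := abs_mul _ _
      _ ≤ _ := by gcongr
  have hab : 0 ≤ |a| + |b| := by positivity
  have b6 : 4 * (|a| + |b|) * (J * √K) ≤ 8 * √3 * (2:ℝ) ^ ((1:ℝ)/4) * (|a| + |b|)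
          * (J ^ ((3:ℝ)/4) * K ^ ((3:ℝ)/4)) := by gcongr
  have hjk : 0 ≤ J * √K := by positivity
  rw [mul_assoc _ (J ^ ((3:ℝ)/4)) _]
  refine le_trans ?_ (add_le_add_right b6 _)
  linarith

/-- energy identity pieces on one component: `∫ f_x f_xt = - ∫ f_xx f_t`. -/
lemma B_parts {f : ℝ × ℝ → ℝ} (hf : ContDiffOn ℝ (⊤ : ℕ∞) f BS)
    (h0 : ∀ s ≥ 0, f (s, 0) = 0) (h1 : ∀ s ≥ 0, f (s, 1) = 0) {t : ℝ} (ht : 0 ≤ t) :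
    ∫ x in (0:ℝ)..1, BDx f (t, x) * BDt (BDx f) (t, x)
      = - ∫ x in (0:ℝ)..1, BDx (BDx f) (t, x) * BDt f (t, x) := by
  have e : ∫ x in (0:ℝ)..1, BDx f (t, x) * BDt (BDx f) (t, x)
      = ∫ x in (0:ℝ)..1, BDx f (t, x) * BDx (BDt f) (t, x) := by
    apply intervalIntegral.integral_congr
    intro x hx
    rw [uIcc_of_le zero_le_one] at hx
    simp only [BDxt_symm hf (show (t, x) ∈ BS from ⟨ht, hx⟩)]
  rw [e, intervalIntegral.integral_mul_deriv_eq_deriv_mul_of_hasDerivWithinAt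
    (u := fun x => BDx f (t, x)) (v := fun x => BDt f (t, x))
    (u' := fun x => BDx (BDx f) (t, x)) (v' := fun x => BDx (BDt f) (t, x))]
  · rw [BDt_bdry hf ht (by simp) h0, BDt_bdry hf ht (by simp) h1]
    ring
  · rw [uIcc_of_le zero_le_one]
    exact fun x hx => BDx_hasDeriv (BDx_smooth hf) ht hx
  · rw [uIcc_of_le zero_le_one]
    exact fun x hx => BDx_hasDeriv (BDt_smooth hf) ht hx
  · exact B_int (B_slice (BDx_smooth (BDx_smooth hf)).continuousOn ht) le_rfl zero_le_one le_rfl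
  · exact B_int (B_slice (BDx_smooth (BDt_smooth hf)).continuousOn ht) le_rfl zero_le_one le_rfl

/-- the equation, in terms of one-sided derivatives, on the whole closed strip -/
lemma B_pde {a : ℝ} {f u v : ℝ × ℝ → ℝ} (hf : ContDiffOn ℝ (⊤ : ℕ∞) f BS)
    (hu : ContDiffOn ℝ (⊤ : ℕ∞) u BS) (hv : ContDiffOn ℝ (⊤ : ℕ∞) v BS)
    (heq : ∀ t ≥ (0:ℝ), ∀ x ∈ Set.Icc (0:ℝ) 1,
      deriv (fun s => f (s, x)) t =
        deriv (deriv (fun y => f (t, y))) x - f (t, x) * deriv (fun y => f (t, y)) x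
          - a * deriv (fun y => u (t, y) * v (t, y)) x) :
    EqOn (BDt f) (fun p => BDx (BDx f) p - f p * BDx f p
      - a * (BDx u p * v p + u p * BDx v p)) BS := by
  have c0 := hf.continuousOn
  have c1 := hu.continuousOn
  have c2 := hv.continuousOn
  have c3 := (BDx_smooth hf).continuousOn
  have c4 := (BDx_smooth (BDx_smooth hf)).continuousOn
  have c5 := (BDx_smooth hu).continuousOn
  have c6 := (BDx_smooth hv).continuousOn
  have hsub : Ioi (0:ℝ) ×ˢ Ioo (0:ℝ) 1 ⊆ BS := by
    rw [← BS_clos]; exact subset_closure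
  refine Set.EqOn.of_subset_closure (s := Ioi (0:ℝ) ×ˢ Ioo (0:ℝ) 1) ?_
    (BDt_smooth hf).continuousOn (by fun_prop) hsub BS_clos.ge
  rintro ⟨t, x⟩ ⟨ht, hx⟩
  have ht : 0 < t := ht
  have hx : x ∈ Ioo (0:ℝ) 1 := hx
  have hx' := Ioo_subset_Icc_self hx
  have h := heq t ht.le x hx'
  have hprod : deriv (fun y => u (t, y) * v (t, y)) x
      = BDx u (t, x) * v (t, x) + u (t, x) * BDx v (t, x) :=
    (((BDx_hasDeriv hu ht.le hx').mul (BDx_hasDeriv hv ht.le hx')).hasDerivAt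
      (Icc_mem_nhds hx.1 hx.2)).deriv
  rw [BDt_deriv hf ht hx', BDxx_deriv hf ht.le hx, BDx_deriv hf ht.le hx, hprod] at h
  exact h

lemma B_expand_aux (a : ℝ) {f fx fxx v ux u vx : ℝ → ℝ} (c0 : ContinuousOn f (Icc 0 1))
    (c1 : ContinuousOn fx (Icc 0 1)) (c2 : ContinuousOn fxx (Icc 0 1))
    (c3 : ContinuousOn v (Icc 0 1)) (c4 : ContinuousOn ux (Icc 0 1))
    (c5 : ContinuousOn u (Icc 0 1)) (c6 : ContinuousOn vx (Icc 0 1)) :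
    ∫ x in (0:ℝ)..1, (- fxx x ^ 2 + f x * fx x * fxx x
        + a * (v x * ux x * fxx x + u x * vx x * fxx x))
      = - (∫ x in (0:ℝ)..1, fxx x ^ 2) + (∫ x in (0:ℝ)..1, f x * fx x * fxx x)
        + a * ((∫ x in (0:ℝ)..1, v x * ux x * fxx x) + ∫ x in (0:ℝ)..1, u x * vx x * fxx x) := by
  rw [← intervalIntegral.integral_neg,
    ← intervalIntegral.integral_add, ← intervalIntegral.integral_add,
    ← intervalIntegral.integral_const_mul, ← intervalIntegral.integral_add]
  all_goals
    refine B_int ?_ le_rfl zero_le_one le_rfl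
    fun_prop

/-- expanded energy identity -/
lemma B_expand {a : ℝ} {f u v : ℝ × ℝ → ℝ} (hf : ContDiffOn ℝ (⊤ : ℕ∞) f BS)
    (hu : ContDiffOn ℝ (⊤ : ℕ∞) u BS) (hv : ContDiffOn ℝ (⊤ : ℕ∞) v BS)
    (hpde : EqOn (BDt f) (fun p => BDx (BDx f) p - f p * BDx f p
      - a * (BDx u p * v p + u p * BDx v p)) BS) {t : ℝ} (ht : 0 ≤ t) :
    - ∫ x in (0:ℝ)..1, BDx (BDx f) (t, x) * BDt f (t, x)
      = - (∫ x in (0:ℝ)..1, BDx (BDx f) (t, x) ^ 2)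
        + (∫ x in (0:ℝ)..1, f (t, x) * BDx f (t, x) * BDx (BDx f) (t, x))
        + a * ((∫ x in (0:ℝ)..1, v (t, x) * BDx u (t, x) * BDx (BDx f) (t, x))
          + ∫ x in (0:ℝ)..1, u (t, x) * BDx v (t, x) * BDx (BDx f) (t, x)) := by
  have c0 := B_slice hf.continuousOn ht
  have c1 := B_slice hu.continuousOn ht
  have c2 := B_slice hv.continuousOn ht
  have c3 := B_slice (BDx_smooth hf).continuousOn ht
  have c4 := B_slice (BDx_smooth (BDx_smooth hf)).continuousOn ht
  have c5 := B_slice (BDx_smooth hu).continuousOn ht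
  have c6 := B_slice (BDx_smooth hv).continuousOn ht
  rw [← B_expand_aux a c0 c3 c4 c2 c5 c1 c6, ← intervalIntegral.integral_neg]
  apply intervalIntegral.integral_congr
  intro x hx
  rw [uIcc_of_le zero_le_one] at hx
  simp only [hpde (show (t, x) ∈ BS from ⟨ht, hx⟩)]
  ring

lemma B_energy_deriv {f : ℝ × ℝ → ℝ} (hf : ContDiffOn ℝ (⊤ : ℕ∞) f BS)
    (h0 : ∀ s ≥ 0, f (s, 0) = 0) (h1 : ∀ s ≥ 0, f (s, 1) = 0) {t : ℝ} (ht : 0 ≤ t) :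
    HasDerivWithinAt (fun t => ∫ x in (0:ℝ)..1, (deriv (fun y => f (t, y)) x) ^ 2)
      (2 * -∫ x in (0:ℝ)..1, BDx (BDx f) (t, x) * BDt f (t, x)) (Ici 0) t := by
  have c3 := (BDx_smooth hf).continuousOn
  have c4 := (BDt_smooth (BDx_smooth hf)).continuousOn
  have h := B_leibniz (F := fun p => BDx f p ^ 2) (g := fun p => 2 * (BDx f p * BDt (BDx f) p))
    (by fun_prop) (by fun_prop) (fun t ht x hx => by
      have := (BDt_hasDeriv (BDx_smooth hf) ht hx).fun_pow 2
      have e : 2 * (BDx f (t, x) * BDt (BDx f) (t, x))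
          = ((2 : ℕ) : ℝ) * BDx f (t, x) ^ (2 - 1) * BDt (BDx f) (t, x) := by
        norm_num [mul_assoc]
      simp only [e]
      exact this) ht
  rw [intervalIntegral.integral_const_mul, B_parts hf h0 h1 ht] at h
  have e : ∀ s ≥ 0, ∫ x in (0:ℝ)..1, (deriv (fun y => f (s, y)) x) ^ 2
      = ∫ x in (0:ℝ)..1, BDx f (s, x) ^ 2 := by
    intro s hs
    apply intervalIntegral.integral_congr_Ioo_of_le zero_le_one
    intro x hx
    simp only [BDx_deriv hf hs hx]
  exact h.congr (fun s hs => e s hs) (e t ht)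

/-- For smooth solutions `u, v` of the coupled Burgers' equations on `[0,∞) × [0,1]`
with zero Dirichlet boundary conditions, the energy
`J t = ½(‖∂ₓu(t)‖² + ‖∂ₓv(t)‖²)` satisfies, with
`K t = ½(‖∂ₓₓu(t)‖² + ‖∂ₓₓv(t)‖²)`,
`J'(t) ≤ -2K + 8JK^{1/2} + 8√3·2^{1/4}(|a|+|b|) J^{3/4} K^{3/4}` for all `t ≥ 0`. -/
theorem coupled_burgers_energy_inequality_raw (a b : ℝ) (u v : ℝ × ℝ → ℝ)
    (hu : ContDiffOn ℝ (⊤ : ℕ∞) u (Set.Ici (0:ℝ) ×ˢ Set.Icc (0:ℝ) 1))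
    (hv : ContDiffOn ℝ (⊤ : ℕ∞) v (Set.Ici (0:ℝ) ×ˢ Set.Icc (0:ℝ) 1))
    (hequ : ∀ t ≥ (0:ℝ), ∀ x ∈ Set.Icc (0:ℝ) 1,
      deriv (fun s => u (s, x)) t =
        deriv (deriv (fun y => u (t, y))) x - u (t, x) * deriv (fun y => u (t, y)) x
          - a * deriv (fun y => u (t, y) * v (t, y)) x)
    (heqv : ∀ t ≥ (0:ℝ), ∀ x ∈ Set.Icc (0:ℝ) 1,
      deriv (fun s => v (s, x)) t =
        deriv (deriv (fun y => v (t, y))) x - v (t, x) * deriv (fun y => v (t, y)) x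
          - b * deriv (fun y => u (t, y) * v (t, y)) x)
    (hbc : ∀ t ≥ (0:ℝ), u (t, 0) = 0 ∧ u (t, 1) = 0 ∧ v (t, 0) = 0 ∧ v (t, 1) = 0)
    (J K : ℝ → ℝ)
    (hJ : ∀ t, J t = (1/2) * ((∫ x in (0:ℝ)..1, (deriv (fun y => u (t, y)) x) ^ 2)
        + ∫ x in (0:ℝ)..1, (deriv (fun y => v (t, y)) x) ^ 2))
    (hK : ∀ t, K t = (1/2) * ((∫ x in (0:ℝ)..1, (deriv (deriv (fun y => u (t, y))) x) ^ 2)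
        + ∫ x in (0:ℝ)..1, (deriv (deriv (fun y => v (t, y))) x) ^ 2)) :
    ∃ J' : ℝ → ℝ, (∀ t ≥ (0:ℝ), HasDerivWithinAt J (J' t) (Set.Ici (0:ℝ)) t) ∧
      ∀ t ≥ (0:ℝ), J' t ≤ -2 * K t + 8 * J t * Real.sqrt (K t)
        + 8 * Real.sqrt 3 * (2:ℝ) ^ ((1:ℝ)/4) * (|a| + |b|)
          * (J t) ^ ((3:ℝ)/4) * (K t) ^ ((3:ℝ)/4) := by
  refine ⟨fun t => (1/2) * (2 * (-∫ x in (0:ℝ)..1, BDx (BDx u) (t, x) * BDt u (t, x))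
    + 2 * (-∫ x in (0:ℝ)..1, BDx (BDx v) (t, x) * BDt v (t, x))), ?_, ?_⟩
  · intro t ht
    have h := ((B_energy_deriv hu (fun s hs => (hbc s hs).1) (fun s hs => (hbc s hs).2.1) ht).add
      (B_energy_deriv hv (fun s hs => (hbc s hs).2.2.1) (fun s hs => (hbc s hs).2.2.2) ht)).const_mul
        (1/2 : ℝ)
    exact h.congr (fun s _ => hJ s) (hJ t)
  · intro t ht
    obtain ⟨u0, u1, v0, v1⟩ := hbc t ht
    have eu := B_expand hu hu hv (B_pde hu hu hv hequ) ht
    have ev := B_expand hv hu hv (B_pde hv hu hv heqv) ht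
    have hux := fun x hx => BDx_hasDeriv hu (x := x) ht hx
    have hvx := fun x hx => BDx_hasDeriv hv (x := x) ht hx
    have huxx := fun x hx => BDx_hasDeriv (BDx_smooth hu) (x := x) ht hx
    have hvxx := fun x hx => BDx_hasDeriv (BDx_smooth hv) (x := x) ht hx
    have cu := B_slice (BDx_smooth hu).continuousOn ht
    have cv := B_slice (BDx_smooth hv).continuousOn ht
    have cuu := B_slice (BDx_smooth (BDx_smooth hu)).continuousOn ht
    have cvv := B_slice (BDx_smooth (BDx_smooth hv)).continuousOn ht
    have e1 : ∀ f : ℝ × ℝ → ℝ, ContDiffOn ℝ (⊤ : ℕ∞) f BS →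
        ∫ x in (0:ℝ)..1, (deriv (fun y => f (t, y)) x) ^ 2
        = √(∫ x in (0:ℝ)..1, BDx f (t, x) ^ 2) ^ 2 := by
      intro f hf
      rw [Real.sq_sqrt (intervalIntegral.integral_nonneg zero_le_one (fun y _ => sq_nonneg _))]
      apply intervalIntegral.integral_congr_Ioo_of_le zero_le_one
      intro x hx
      simp only [BDx_deriv hf ht hx]
    have e2 : ∀ f : ℝ × ℝ → ℝ, ContDiffOn ℝ (⊤ : ℕ∞) f BS →
        ∫ x in (0:ℝ)..1, (deriv (deriv (fun y => f (t, y))) x) ^ 2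
        = √(∫ x in (0:ℝ)..1, BDx (BDx f) (t, x) ^ 2) ^ 2 := by
      intro f hf
      rw [Real.sq_sqrt (intervalIntegral.integral_nonneg zero_le_one (fun y _ => sq_nonneg _))]
      apply intervalIntegral.integral_congr_Ioo_of_le zero_le_one
      intro x hx
      simp only [BDxx_deriv hf ht hx]
    have e3 : ∀ f : ℝ × ℝ → ℝ, √(∫ x in (0:ℝ)..1, BDx f (t, x) ^ 2) ^ 2
        = ∫ x in (0:ℝ)..1, BDx f (t, x) ^ 2 := fun f =>
      Real.sq_sqrt (intervalIntegral.integral_nonneg zero_le_one (fun y _ => sq_nonneg _))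
    have hJt := hJ t
    have hKt := hK t
    rw [e1 u hu, e1 v hv] at hJt
    rw [e2 u hu, e2 v hv] at hKt
    have pu := B_poincare hux huxx cuu u0 u1
    have pv := B_poincare hvx hvxx cvv v0 v1
    have fin := B_final (a := a) (b := b) (Real.sqrt_nonneg _) (Real.sqrt_nonneg _)
      (Real.sqrt_nonneg _) (Real.sqrt_nonneg _) hJt hKt
      (by rw [e3, e3]; exact pu) (by rw [e3, e3]; exact pv)
      (B_triple hux cu u0 cu cuu) (B_triple hvx cv v0 cv cvv)
      (B_triple hvx cv v0 cu cuu) (B_triple hux cu u0 cv cuu)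
      (B_triple hvx cv v0 cu cvv) (B_triple hux cu u0 cv cvv)
    refine le_trans (le_of_eq ?_) fin
    rw [e3, e3] at hKt
    simp only [eu, ev]
    rw [hKt]
    ring
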